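/- Let Ω ⊂ ℝ² be a bounded convex open set with C² boundary and let u ∈ Φ₀(Ω) ∩ C²(E_u). Then the anisotropic Hessian integral admits the representation I_H[u,Ω] = ∫_Ω u det_H[u] dx = (1/2) ∫_Ω k_H(x) H(∇u)³ dx. -/

import Mathlib

open MeasureTheory Set
open scoped ENNReal NNReal RealInnerProductSpace

noncomputable section

/-- The plane `ℝ²`. -/
abbrev E2 : Type := EuclideanSpace ℝ (Fin 2)

/-- The `i`-th partial derivative of `f` at `x`. -/
def pd (f : E2 → ℝ) (i : Fin 2) (x : E2) : ℝ :=
  fderiv ℝ f x (EuclideanSpace.single i 1)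

/-- The Hessian matrix of `f` at `x`. -/
def hessian (f : E2 → ℝ) (x : E2) : Matrix (Fin 2) (Fin 2) ℝ :=
  Matrix.of fun i j => pd (pd f j) i x

/-- The hypotheses on the anisotropy `H`: a convex, coercive, positively `1`-homogeneous even
function, with `H²` strongly convex and `C²` away from the origin. -/
structure IsAnisoNorm (H : E2 → ℝ) : Prop where
  nonneg : ∀ ξ, 0 ≤ H ξ
  convex : ConvexOn ℝ Set.univ H
  coercive : ∃ α > 0, ∀ ξ, α * ‖ξ‖ ≤ H ξ
  homog : ∀ (t : ℝ) (ξ : E2), H (t • ξ) = |t| * H ξ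
  smooth : ContDiffOn ℝ 2 H {(0 : E2)}ᶜ
  posdef : ∀ ξ : E2, ξ ≠ 0 → ∀ v : E2, v ≠ 0 →
      0 < ∑ i, ∑ j, hessian (fun z => H z ^ 2) ξ i j * v i * v j

/-- The polar function `H^o(v) = sup_{ξ ≠ 0} (ξ·v)/H(ξ)`. -/
def polar (H : E2 → ℝ) (v : E2) : ℝ :=
  ⨆ ξ : {ξ : E2 // ξ ≠ 0}, ⟪(ξ : E2), v⟫ / H ξ

/-- The Wulff shape `𝒲 = {H^o < 1}`. -/
def Wulff (H : E2 → ℝ) : Set E2 := {ξ | polar H ξ < 1}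

/-- The scaled Wulff shape `𝒲_R = {H^o < R}`. -/
def wulffR (H : E2 → ℝ) (R : ℝ) : Set E2 := {ξ | polar H ξ < R}

/-- `κ`, the Lebesgue measure of the Wulff shape. -/
def kappa (H : E2 → ℝ) : ℝ := (volume (Wulff H)).toReal

/-- `F(ξ) = H(ξ)²/2`. -/
def Fani (H : E2 → ℝ) (ξ : E2) : ℝ := H ξ ^ 2 / 2

/-- The matrix `A[u] = ∇²_ξ F(∇u) · ∇²u`. -/
def Amat (H u : E2 → ℝ) (x : E2) : Matrix (Fin 2) (Fin 2) ℝ :=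
  hessian (Fani H) (gradient u x) * hessian u x

/-- The anisotropic Monge–Ampère operator `det_H[u] = det ∇²_ξF(∇u) · det ∇²u`. -/
def detH (H u : E2 → ℝ) (x : E2) : ℝ :=
  (hessian (Fani H) (gradient u x)).det * (hessian u x).det

/-- The cofactor matrix of a `2×2` matrix. -/
def cof (B : Matrix (Fin 2) (Fin 2) ℝ) : Matrix (Fin 2) (Fin 2) ℝ :=
  Matrix.of ![![B 1 1, -B 1 0], ![-B 0 1, B 0 0]]

/-- The anisotropic curvature of the level line of `u` through `x`:
`k_H(x) = -Σ_{i,j} H_{ξ_iξ_j}(∇u) u_{ij}`. -/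
def kH (H u : E2 → ℝ) (x : E2) : ℝ :=
  -∑ i, ∑ j, hessian H (gradient u x) i j * hessian u x i j

/-- The class `Φ₀(Ω)`: `W^{2,2}(Ω) ∩ C¹(Ω̄)` functions vanishing on `∂Ω`, concave in `Ω`. -/
structure MemPhi0 (Ω : Set E2) (u : E2 → ℝ) : Prop where
  sobolev : ∀ i j, MemLp (fun x => hessian u x i j) 2 (volume.restrict Ω)
  c1 : ContDiffOn ℝ 1 u (closure Ω)
  bzero : ∀ x ∈ frontier Ω, u x = 0
  concave : ConcaveOn ℝ Ω u

/-- `max_{Ω̄} u`. -/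
def maxcl (Ω : Set E2) (u : E2 → ℝ) : ℝ := sSup (u '' closure Ω)

/-- The set `E_u = {x ∈ Ω : 0 ≤ u(x) < max_{Ω̄} u}`. -/
def Eu (Ω : Set E2) (u : E2 → ℝ) : Set E2 :=
  {x ∈ Ω | 0 ≤ u x ∧ u x < maxcl Ω u}

/-- `K` has `C²` boundary: it admits a global `C²` defining function with nonvanishing
gradient on the boundary. -/
def HasC2Boundary (K : Set E2) : Prop :=
  ∃ φ : E2 → ℝ, ContDiff ℝ 2 φ ∧ K = {x | φ x < 0} ∧
    frontier K = {x | φ x = 0} ∧ ∀ x ∈ frontier K, gradient φ x ≠ 0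

/-- `K` has `C¹` boundary. -/
def HasC1Boundary (K : Set E2) : Prop :=
  ∃ φ : E2 → ℝ, ContDiff ℝ 1 φ ∧ K = {x | φ x < 0} ∧
    frontier K = {x | φ x = 0} ∧ ∀ x ∈ frontier K, gradient φ x ≠ 0

/-- The Euclidean outer unit normal `ν = -∇u/|∇u|` to a superlevel set of `u`. -/
def nuLevel (u : E2 → ℝ) (x : E2) : E2 := -(‖gradient u x‖⁻¹ • gradient u x)

/-- The level set `Σ_t = {u = t}` (in `Ω̄`). -/
def levelSet (Ω : Set E2) (u : E2 → ℝ) (t : ℝ) : Set E2 :=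
  {x ∈ closure Ω | u x = t}

/-- The superlevel set `Ω_t = {u > t}`. -/
def superLevel (Ω : Set E2) (u : E2 → ℝ) (t : ℝ) : Set E2 :=
  {x ∈ Ω | t < u x}

/-- `λ_H(t) = P_H({u > t}) = ∫_{{u = t}} H(ν) dℋ¹`. -/
def lambdaH (H : E2 → ℝ) (Ω : Set E2) (u : E2 → ℝ) (t : ℝ) : ℝ :=
  ∫ x in levelSet Ω u t, H (nuLevel u x) ∂(μH[1] : Measure E2)

/-- The anisotropic perimeter `P_H(Ω) = λ_H(0)` of `Ω = {u > 0}`. -/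
def PerH (H : E2 → ℝ) (Ω : Set E2) (u : E2 → ℝ) : ℝ := lambdaH H Ω u 0

/-- The rearrangement `u^♦(s) = sup{t ≥ 0 : λ_H(t) ≥ s}` of `u` with respect to the
anisotropic perimeter. -/
def diamondRe (H : E2 → ℝ) (Ω : Set E2) (u : E2 → ℝ) (s : ℝ) : ℝ :=
  sSup {t : ℝ | 0 ≤ t ∧ s ≤ lambdaH H Ω u t}

/-- The anisotropic radial symmetrand `u^★(x) = u^♦(2κ H^o(x))`. -/
def starRe (H : E2 → ℝ) (Ω : Set E2) (u : E2 → ℝ) (x : E2) : ℝ :=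
  diamondRe H Ω u (2 * kappa H * polar H x)

/-- `Ω^★ = 𝒲_R` with `R = P_H(Ω)/(2κ)`. -/
def OmegaStar (H : E2 → ℝ) (Ω : Set E2) (u : E2 → ℝ) : Set E2 :=
  wulffR H (PerH H Ω u / (2 * kappa H))

/-- The distribution function `μ(t) = |{x ∈ Ω : |f(x)| > t}|`. -/
def distrib (Ω : Set E2) (f : E2 → ℝ) (t : ℝ) : ℝ :=
  (volume {x ∈ Ω | t < |f x|}).toReal

/-- The decreasing rearrangement `f*(s) = sup{t : μ(t) > s}`. -/
def decRe (Ω : Set E2) (f : E2 → ℝ) (s : ℝ) : ℝ :=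
  sSup {t : ℝ | s < distrib Ω f t}

open Filter Topology

/-- standard basis vector -/
def ee (i : Fin 2) : E2 := EuclideanSpace.single i 1

lemma pd_cont {f : E2 → ℝ} (hf : ContDiff ℝ 1 f) (i : Fin 2) : Continuous (pd f i) := by
  have := hf.continuous_fderiv one_ne_zero
  unfold pd
  fun_prop

lemma pd_cs {f : E2 → ℝ} (hf : HasCompactSupport f) (i : Fin 2) :
    HasCompactSupport (pd f i) := by
  have := hf.fderiv_apply (𝕜 := ℝ) (EuclideanSpace.single i 1)
  exact this

lemma lineDeriv_eq_pd {f : E2 → ℝ} (hf : ContDiff ℝ 1 f) (x : E2) (i : Fin 2) :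
    lineDeriv ℝ f x (ee i) = pd f i x :=
  (hf.differentiable one_ne_zero x).lineDeriv_eq_fderiv

lemma lineDeriv_neg_eq_pd {f : E2 → ℝ} (hf : ContDiff ℝ 1 f) (x : E2) (i : Fin 2) :
    lineDeriv ℝ f x (-ee i) = - pd f i x := by
  rw [(hf.differentiable one_ne_zero x).lineDeriv_eq_fderiv, map_neg]; rfl

lemma ibp0 {f g : E2 → ℝ} (hf : ContDiff ℝ 1 f) (hg : ContDiff ℝ 1 g)
    (cf : HasCompactSupport f) (cg : HasCompactSupport g) (i : Fin 2) :
    ∫ x, pd f i x * g x = - ∫ x, f x * pd g i x := by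
  obtain ⟨C, hC⟩ := hf.lipschitzWith_of_hasCompactSupport cf one_ne_zero
  obtain ⟨D, hD⟩ := hg.lipschitzWith_of_hasCompactSupport cg one_ne_zero
  have := hC.integral_lineDeriv_mul_eq (μ := volume) hD cg (ee i)
  simp only [lineDeriv_eq_pd hf, lineDeriv_neg_eq_pd hg] at this
  rw [this, ← integral_neg]
  congr 1; ext x; ring

lemma curl_free {w b : E2 → ℝ} (hw : ContDiff ℝ 1 w) (hb : ContDiff ℝ 1 b)
    (cw : HasCompactSupport w) (cb : HasCompactSupport b) (i j : Fin 2) :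
    ∫ x, pd b j x * pd w i x = ∫ x, pd w j x * pd b i x := by
  obtain ⟨C, hC⟩ := hb.lipschitzWith_of_hasCompactSupport cb one_ne_zero
  obtain ⟨D, hD⟩ := hw.lipschitzWith_of_hasCompactSupport cw one_ne_zero
  have A := hC.integral_inv_smul_sub_mul_tendsto_integral_lineDeriv_mul (μ := volume)
    ((pd_cont hw i).integrable_of_hasCompactSupport (pd_cs cw i)) (ee j)
  have B := (hD.integral_inv_smul_sub_mul_tendsto_integral_lineDeriv_mul (μ := volume)
    ((pd_cont hb i).integrable_of_hasCompactSupport (pd_cs cb i)) (-ee j)).neg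
  simp only [lineDeriv_eq_pd hb, lineDeriv_neg_eq_pd hw] at A B
  rw [← integral_neg] at B
  have e : ∀ t : ℝ, ∫ x, (t⁻¹ • (b (x + t • ee j) - b x)) * pd w i x
      = - ∫ x, (t⁻¹ • (w (x + t • (-ee j)) - w x)) * pd b i x := by
    intro t
    have c1 : HasCompactSupport (fun x => b (x + t • ee j)) :=
      cb.comp_homeomorph (Homeomorph.addRight (t • ee j))
    have d1 : ContDiff ℝ 1 (fun x => b (x + t • ee j)) := hb.comp (by fun_prop)
    have cc : HasCompactSupport (fun x => b (x + t • ee j) - b x) := c1.sub cb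
    have dd : ContDiff ℝ 1 (fun x => b (x + t • ee j) - b x) := d1.sub hb
    have pdd : ∀ x, pd (fun x => b (x + t • ee j) - b x) i x
        = pd b i (x + t • ee j) - pd b i x := by
      intro x
      unfold pd
      rw [fderiv_fun_sub (d1.differentiable one_ne_zero x) (hb.differentiable one_ne_zero x)]
      rw [fderiv_comp_add_right]; rfl
    have k := ibp0 dd hw cc cw i
    simp only [pdd] at k
    have S3 : ∫ x, pd b i (x + t • ee j) * w x = ∫ x, pd b i x * w (x + t • (-ee j)) := by
      rw [← integral_add_right_eq_self _ (t • (-ee j))]; simp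
    have ib := pd_cont hb i
    have icb := pd_cs cb i
    have S4 : ∫ x, (pd b i (x + t • ee j) - pd b i x) * w x
        = ∫ x, (w (x + t • (-ee j)) - w x) * pd b i x := by
      have hwc := hw.continuous
      simp_rw [sub_mul]
      rw [integral_sub, integral_sub, S3]
      · simp_rw [mul_comm]
      · apply Continuous.integrable_of_hasCompactSupport (by fun_prop)
        exact icb.mul_left
      · apply Continuous.integrable_of_hasCompactSupport (by fun_prop)
        exact icb.mul_left
      · apply Continuous.integrable_of_hasCompactSupport (by fun_prop)
        exact cw.mul_left
      · apply Continuous.integrable_of_hasCompactSupport (by fun_prop)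
        exact cw.mul_left
    simp only [smul_eq_mul, mul_assoc, integral_const_mul]
    rw [← S4, k]; ring
  simp only [e] at A
  have := tendsto_nhds_unique A B
  rw [this]
  congr 1; ext x; ring

lemma exists_cutoff {K Ω : Set E2} (hK : IsCompact K) (hΩ : IsOpen Ω) (h : K ⊆ Ω) :
    ∃ χ : E2 → ℝ, ContDiff ℝ 1 χ ∧ HasCompactSupport χ ∧ tsupport χ ⊆ Ω ∧
      ∀ x ∈ K, ∀ᶠ y in 𝓝 x, χ y = 1 := by
  obtain ⟨L, hL, hKL, hLΩ⟩ := exists_compact_between hK hΩ h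
  obtain ⟨f, h1, h2, -⟩ := exists_contMDiffMap_one_nhds_of_subset_interior
    (modelWithCornersSelf ℝ E2) (n := 1) hK.isClosed hKL
  have hs : tsupport f ⊆ L := by
    apply closure_minimal _ hL.isClosed
    intro x hx
    by_contra hc
    exact hx (h2 x hc)
  refine ⟨f, ?_, ?_, ?_, ?_⟩
  · exact f.contMDiff.contDiff
  · exact hL.of_isClosed_subset (isClosed_tsupport _) hs
  · exact hs.trans hLΩ
  · intro x hx
    exact h1.filter_mono (nhds_le_nhdsSet hx)

/-- product of a compactly supported function with one that is smooth on the domain -/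
lemma mul_smooth {Ω : Set E2} (hΩ : IsOpen Ω) {φ a : E2 → ℝ} (hφ : ContDiff ℝ 1 φ)
    (sφ : tsupport φ ⊆ Ω) (ha : ContDiffOn ℝ 1 a Ω) : ContDiff ℝ 1 (fun x => φ x * a x) := by
  rw [contDiff_iff_contDiffAt]
  intro x
  by_cases hx : x ∈ Ω
  · exact hφ.contDiffAt.mul (ha.contDiffAt (hΩ.mem_nhds hx))
  · have : x ∈ (tsupport φ)ᶜ := fun h => hx (sφ h)
    have h0 : (fun x => φ x * a x) =ᶠ[𝓝 x] fun _ => 0 := by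
      filter_upwards [(isClosed_tsupport φ).isOpen_compl.mem_nhds this] with y hy
      rw [image_eq_zero_of_notMem_tsupport hy, zero_mul]
    exact contDiffAt_const.congr_of_eventuallyEq h0

lemma pd_congr {f g : E2 → ℝ} {x : E2} (h : f =ᶠ[𝓝 x] g) (i : Fin 2) : pd f i x = pd g i x := by
  unfold pd; rw [h.fderiv_eq]

lemma pd_mul {f g : E2 → ℝ} {x : E2} (hf : DifferentiableAt ℝ f x) (hg : DifferentiableAt ℝ g x)
    (i : Fin 2) : pd (fun x => f x * g x) i x = f x * pd g i x + g x * pd f i x := by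
  unfold pd; rw [fderiv_fun_mul hf hg]; simp

lemma pd_zero_of_notMem {f : E2 → ℝ} {x : E2} (h : x ∉ tsupport f) (i : Fin 2) :
    pd f i x = 0 := by
  have h0 : f =ᶠ[𝓝 x] fun _ => 0 := by
    filter_upwards [(isClosed_tsupport f).isOpen_compl.mem_nhds h] with y hy
    exact image_eq_zero_of_notMem_tsupport hy
  rw [pd_congr h0]; simp [pd]

lemma curl_loc {φ a b : E2 → ℝ} (hφ : ContDiff ℝ 1 φ)
    (cφ : HasCompactSupport φ) (ha : ContDiff ℝ 1 a)
    (ca : HasCompactSupport a) (hb : ContDiff ℝ 1 b) (cb : HasCompactSupport b) :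
    ∫ x, φ x * (pd a 0 x * pd b 1 x - pd a 1 x * pd b 0 x)
      = - ∫ x, a x * (pd φ 0 x * pd b 1 x - pd φ 1 x * pd b 0 x) := by
  have hw : ContDiff ℝ 1 (fun x => φ x * a x) := hφ.mul ha
  have cw : HasCompactSupport (fun x => φ x * a x) := cφ.mul_right
  have h := curl_free hw hb cw cb 0 1
  have e : ∀ i x, pd (fun x => φ x * a x) i x = φ x * pd a i x + a x * pd φ i x := fun i x =>
    pd_mul (hφ.differentiable one_ne_zero x) (ha.differentiable one_ne_zero x) i
  simp only [e] at h
  have c1 := hφ.continuous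
  have c2 := ha.continuous
  have k1 := fun i => pd_cont hφ i
  have k2 := fun i => pd_cont ha i
  have k3 := fun i => pd_cont hb i
  have I1 : Integrable (fun x => φ x * (pd a 0 x * pd b 1 x - pd a 1 x * pd b 0 x)) :=
    Continuous.integrable_of_hasCompactSupport
      (c1.mul (((k2 0).mul (k3 1)).sub ((k2 1).mul (k3 0)))) cφ.mul_right
  have I2 : Integrable (fun x => a x * (pd φ 0 x * pd b 1 x - pd φ 1 x * pd b 0 x)) :=
    Continuous.integrable_of_hasCompactSupport
      (c2.mul (((k1 0).mul (k3 1)).sub ((k1 1).mul (k3 0)))) ca.mul_right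
  rw [← sub_eq_zero, ← integral_sub] at h
  · rw [eq_neg_iff_add_eq_zero, ← integral_add I1 I2, ← h]
    congr 1; ext x; ring
  · exact Continuous.integrable_of_hasCompactSupport
      ((k3 1).mul ((c1.mul (k2 0)).add (c2.mul (k1 0)))) (pd_cs cb 1).mul_right
  · exact Continuous.integrable_of_hasCompactSupport
      (((c1.mul (k2 1)).add (c2.mul (k1 1))).mul (k3 0)) (pd_cs cb 0).mul_left

/-- The weak Jacobian identity. -/
lemma weak_jac {Ω : Set E2} (hΩ : IsOpen Ω) {φ a b : E2 → ℝ} (hφ : ContDiff ℝ 1 φ)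
    (cφ : HasCompactSupport φ) (sφ : tsupport φ ⊆ Ω) (ha : ContDiffOn ℝ 1 a Ω)
    (hb : ContDiffOn ℝ 1 b Ω) :
    ∫ x in Ω, φ x * (pd a 0 x * pd b 1 x - pd a 1 x * pd b 0 x)
      = - (1 / 2) * ∫ x in Ω, (pd φ 0 x * (a x * pd b 1 x - b x * pd a 1 x)
          + pd φ 1 x * (b x * pd a 0 x - a x * pd b 0 x)) := by
  obtain ⟨χ, hχ, cχ, sχ, h1⟩ := exists_cutoff cφ hΩ sφ
  have ha' := mul_smooth hΩ hχ sχ ha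
  have hb' := mul_smooth hΩ hχ sχ hb
  have ca' : HasCompactSupport (fun x => χ x * a x) := cχ.mul_right
  have cb' : HasCompactSupport (fun x => χ x * b x) := cχ.mul_right
  have A := curl_loc hφ cφ ha' ca' hb' cb'
  have B := curl_loc hφ cφ hb' cb' ha' ca'
  set a' := fun x => χ x * a x with a'def
  set b' := fun x => χ x * b x with b'def
  have ea : ∀ x ∈ tsupport φ, a' =ᶠ[𝓝 x] a := fun x hx => by
    filter_upwards [h1 x hx] with y hy
    simp [a'def, hy]
  have eb : ∀ x ∈ tsupport φ, b' =ᶠ[𝓝 x] b := fun x hx => by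
    filter_upwards [h1 x hx] with y hy
    simp [b'def, hy]
  have L : ∫ x in Ω, φ x * (pd a 0 x * pd b 1 x - pd a 1 x * pd b 0 x)
      = ∫ x, φ x * (pd a' 0 x * pd b' 1 x - pd a' 1 x * pd b' 0 x) := by
    rw [setIntegral_eq_integral_of_forall_compl_eq_zero]
    · congr 1; ext x
      by_cases hx : x ∈ tsupport φ
      · simp only [pd_congr (ea x hx), pd_congr (eb x hx)]
      · simp [image_eq_zero_of_notMem_tsupport hx]
    · intro x hx
      simp [image_eq_zero_of_notMem_tsupport (fun h => hx (sφ h))]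
  have R : ∫ x in Ω, (pd φ 0 x * (a x * pd b 1 x - b x * pd a 1 x)
          + pd φ 1 x * (b x * pd a 0 x - a x * pd b 0 x))
      = ∫ x, (a' x * (pd φ 0 x * pd b' 1 x - pd φ 1 x * pd b' 0 x)
         - b' x * (pd φ 0 x * pd a' 1 x - pd φ 1 x * pd a' 0 x)) := by
    rw [setIntegral_eq_integral_of_forall_compl_eq_zero]
    · congr 1; ext x
      by_cases hx : x ∈ tsupport φ
      · simp only [pd_congr (ea x hx), pd_congr (eb x hx), (ea x hx).eq_of_nhds,
          (eb x hx).eq_of_nhds]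
        ring
      · simp [pd_zero_of_notMem hx]
    · intro x hx
      simp [pd_zero_of_notMem (fun h => hx (sφ h))]
  have k1 := fun i => pd_cont hφ i
  have k2 := fun i => pd_cont ha' i
  have k3 := fun i => pd_cont hb' i
  rw [L, R, integral_sub]
  · have B' : ∫ x, φ x * (pd a' 0 x * pd b' 1 x - pd a' 1 x * pd b' 0 x)
      = ∫ x, b' x * (pd φ 0 x * pd a' 1 x - pd φ 1 x * pd a' 0 x) := by
      rw [← neg_inj, ← B, ← integral_neg]
      congr 1; ext x; ring
    linarith
  · exact Continuous.integrable_of_hasCompactSupport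
      (ha'.continuous.mul (((k1 0).mul (k3 1)).sub ((k1 1).mul (k3 0)))) ca'.mul_right
  · exact Continuous.integrable_of_hasCompactSupport
      (hb'.continuous.mul (((k1 0).mul (k2 1)).sub ((k1 1).mul (k2 0)))) cb'.mul_right

lemma fd_smul {E : Type*} [NormedAddCommGroup E] [NormedSpace ℝ E] (f : E → ℝ) (c : ℝ) (x : E) :
    fderiv ℝ (fun p => c • f p) x = c • fderiv ℝ f x :=
  congrFun (fderiv_const_smul_field (𝕜 := ℝ) (f := f) c) x

lemma fderiv_hom {E : Type*} [NormedAddCommGroup E] [NormedSpace ℝ E] {f : E → ℝ} (k : ℕ)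
    (hom : ∀ t : ℝ, 0 < t → ∀ p, f (t • p) = t ^ (k + 1) * f p) (t : ℝ) (ht : 0 < t) (p : E) :
    fderiv ℝ f (t • p) = t ^ k • fderiv ℝ f p := by
  have h1 : (f <| t • ·) = fun p => t ^ (k + 1) • f p := by
    ext p; simp [hom t ht p]
  have h2 := fderiv_comp_smul (f := f) (x := p) (𝕜 := ℝ) t
  rw [h1, fd_smul] at h2
  have : t • fderiv ℝ f (t • p) = t • (t ^ k • fderiv ℝ f p) := by
    rw [← h2, smul_smul, pow_succ']
  exact smul_right_injective _ ht.ne' this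

/-- Truncation near the origin of a one-homogeneous function, with uniform gradient bounds. -/
lemma trunc {E : Type*} [NormedAddCommGroup E] [InnerProductSpace ℝ E] [FiniteDimensional ℝ E]
    {f : E → ℝ} (hf : ContDiffOn ℝ 1 f {0}ᶜ)
    (hom : ∀ t : ℝ, 0 < t → ∀ p, f (t • p) = t * f p) :
    ∃ g : ℕ → E → ℝ, ∃ C : ℝ, 0 ≤ C ∧ (∀ n, ContDiff ℝ 1 (g n)) ∧
      (∀ n p, ‖fderiv ℝ (g n) p‖ ≤ C) ∧ (∀ n p, ‖g n p‖ ≤ C * ‖p‖) ∧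
      (∀ n, ∃ r > 0, ∀ p, ‖p‖ < r → g n p = 0) ∧
      (∀ p, p ≠ 0 → ∀ᶠ n in atTop, g n =ᶠ[𝓝 p] f) := by
  set g0 : E → ℝ := fun p => Real.smoothTransition (‖p‖ ^ 2 - 1) * f p with g0def
  have z0 : ∀ p, ‖p‖ ≤ 1 → g0 p = 0 := by
    intro p hp
    have : ‖p‖ ^ 2 - 1 ≤ 0 := by nlinarith [norm_nonneg p]
    simp [g0def, Real.smoothTransition.zero_of_nonpos this]
  have z1 : ∀ p, 3 / 2 ≤ ‖p‖ → g0 p = f p := by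
    intro p hp
    have : 1 ≤ ‖p‖ ^ 2 - 1 := by nlinarith [norm_nonneg p]
    simp [g0def, Real.smoothTransition.one_of_one_le this]
  have cn : ContDiff ℝ 1 (fun p : E => ‖p‖ ^ 2) := contDiff_norm_sq ℝ
  have c0 : ContDiff ℝ 1 g0 := by
    rw [contDiff_iff_contDiffAt]
    intro p
    by_cases hp : p = 0
    · have : g0 =ᶠ[𝓝 p] fun _ => 0 := by
        filter_upwards [Metric.ball_mem_nhds p one_pos] with q hq
        apply z0
        rw [hp, mem_ball_zero_iff] at hq; exact hq.le
      exact contDiffAt_const.congr_of_eventuallyEq this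
    · have h1 : ContDiffAt ℝ 1 f p := hf.contDiffAt (isOpen_compl_singleton.mem_nhds hp)
      have h2 : ContDiff ℝ 1 (fun p : E => Real.smoothTransition (‖p‖ ^ 2 - 1)) :=
        Real.smoothTransition.contDiff.comp (cn.sub contDiff_const)
      exact h2.contDiffAt.mul h1
  have ez1 : ∀ p, 3 / 2 < ‖p‖ → g0 =ᶠ[𝓝 p] f := by
    intro p hp
    filter_upwards [(isOpen_lt continuous_const continuous_norm).mem_nhds hp] with q hq
    exact z1 q (le_of_lt hq)
  obtain ⟨C, hC⟩ := (isCompact_closedBall (0 : E) 2).exists_bound_of_continuousOn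
    (c0.continuous_fderiv one_ne_zero).continuousOn
  have C0 : 0 ≤ C := (norm_nonneg _).trans (hC 0 (by simp))
  have bd : ∀ p, ‖fderiv ℝ g0 p‖ ≤ C := by
    intro p
    by_cases hp : ‖p‖ ≤ 2
    · exact hC p (by simpa using hp)
    · push Not at hp
      have pp : 0 < ‖p‖ := by linarith
      set q := (2 / ‖p‖) • p with qd
      have nq : ‖q‖ = 2 := by
        rw [qd, norm_smul, Real.norm_of_nonneg (by positivity)]; field_simp
      have := fderiv_hom (f := f) 0 (by simpa using hom) (2 / ‖p‖) (by positivity) p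
      rw [pow_zero, one_smul] at this
      rw [(ez1 p (by linarith)).fderiv_eq, ← this, ← (ez1 q (by linarith)).fderiv_eq]
      exact hC q (by simp [nq])
  have fd : ∀ n : ℕ, ∀ p, fderiv ℝ (fun p => ((n : ℝ) + 1)⁻¹ * g0 (((n : ℝ) + 1) • p)) p
      = fderiv ℝ g0 (((n : ℝ) + 1) • p) := by
    intro n p
    have e : (fun p => ((n : ℝ) + 1)⁻¹ * g0 (((n : ℝ) + 1) • p)) =
      fun p => ((n : ℝ) + 1)⁻¹ • (g0 <| ((n : ℝ) + 1) • ·) p := rfl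
    rw [e, fd_smul, fderiv_comp_smul, smul_smul, inv_mul_cancel₀ (by positivity),
      one_smul]
  have cg : ∀ n : ℕ, ContDiff ℝ 1 (fun p => ((n : ℝ) + 1)⁻¹ * g0 (((n : ℝ) + 1) • p)) := fun n =>
    contDiff_const.mul (c0.comp (contDiff_const_smul _))
  refine ⟨fun n p => ((n : ℝ) + 1)⁻¹ * g0 (((n : ℝ) + 1) • p), C, C0, cg, ?_, ?_, ?_, ?_⟩
  · intro n p
    rw [fd]; exact bd _
  · intro n p
    have := Convex.norm_image_sub_le_of_norm_fderiv_le (𝕜 := ℝ) (s := univ) (x := 0) (y := p)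
      (f := fun p => ((n : ℝ) + 1)⁻¹ * g0 (((n : ℝ) + 1) • p)) (C := C)
      (fun x _ => (cg n).differentiable one_ne_zero x)
      (fun x _ => by rw [fd]; exact bd _) convex_univ (mem_univ _) (mem_univ _)
    simpa [z0 0 (by simp)] using this
  · intro n
    refine ⟨((n : ℝ) + 1)⁻¹, by positivity, fun p hp => ?_⟩
    have : ‖((n : ℝ) + 1) • p‖ ≤ 1 := by
      rw [norm_smul, Real.norm_of_nonneg (by positivity)]
      calc ((n : ℝ) + 1) * ‖p‖ ≤ ((n : ℝ) + 1) * ((n : ℝ) + 1)⁻¹ := by gcongr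
        _ = 1 := mul_inv_cancel₀ (by positivity)
    simp only [z0 _ this, mul_zero]
  · intro p hp
    have pp : 0 < ‖p‖ := norm_pos_iff.2 hp
    obtain ⟨N, hN⟩ := exists_nat_gt (2 / (‖p‖))
    filter_upwards [eventually_ge_atTop N] with n hn
    have hn' : (N : ℝ) ≤ n := by exact_mod_cast hn
    have h3 : 3 / 2 < ((n : ℝ) + 1) * ‖p‖ := by
      rw [div_lt_iff₀ pp] at hN
      nlinarith
    have : Continuous fun q : E => ((n : ℝ) + 1) * ‖q‖ := by fun_prop
    filter_upwards [(isOpen_lt continuous_const this).mem_nhds h3] with q hq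
    have hq' : 3 / 2 ≤ ‖((n : ℝ) + 1) • q‖ := by
      rw [norm_smul, Real.norm_of_nonneg (by positivity)]; exact le_of_lt hq
    rw [z1 _ hq', hom _ (by positivity), inv_mul_cancel_left₀ (by positivity)]

lemma vec_expand (v : E2) : v = ∑ i, v i • EuclideanSpace.single i (1 : ℝ) := by
  ext j; fin_cases j <;> simp

lemma fderiv_expand (f : E2 → ℝ) (x v : E2) :
    fderiv ℝ f x v = v 0 * pd f 0 x + v 1 * pd f 1 x := by
  conv_lhs => rw [vec_expand v]
  simp [pd]

lemma grad_coord (f : E2 → ℝ) (x : E2) (i : Fin 2) : gradient f x i = pd f i x := by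
  have h : inner ℝ (gradient f x) (EuclideanSpace.single i (1 : ℝ)) = pd f i x := by
    unfold gradient pd
    rw [InnerProductSpace.toDual_symm_apply]
  rw [← h, EuclideanSpace.inner_single_right]; simp

lemma euler {f : E2 → ℝ} (k : ℕ) (hom : ∀ t : ℝ, 0 < t → ∀ p, f (t • p) = t ^ k * f p)
    {p : E2} (hf : DifferentiableAt ℝ f p) : p 0 * pd f 0 p + p 1 * pd f 1 p = k * f p := by
  rw [← fderiv_expand]
  have h1 : HasDerivAt (fun t : ℝ => f (t • p)) (fderiv ℝ f p p) 1 := by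
    have a : HasDerivAt (fun t : ℝ => t • p) p 1 := by
      simpa using (hasDerivAt_id (1 : ℝ)).smul_const p
    have b : HasFDerivAt f (fderiv ℝ f p) ((1 : ℝ) • p) := by
      rw [one_smul]; exact hf.hasFDerivAt
    exact b.comp_hasDerivAt (1 : ℝ) a
  have h2 : HasDerivAt (fun t : ℝ => t ^ k * f p) (k * f p) 1 := by
    simpa using (hasDerivAt_pow k (1 : ℝ)).mul_const (f p)
  have e : (fun t : ℝ => f (t • p)) =ᶠ[𝓝 1] fun t : ℝ => t ^ k * f p := by
    filter_upwards [lt_mem_nhds (one_pos : (0 : ℝ) < 1)] with t ht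
    exact hom t ht p
  exact h1.unique (h2.congr_of_eventuallyEq e)

lemma cda_fderiv {f : E2 → ℝ} {x : E2} (h : ContDiffAt ℝ 2 f x) :
    ContDiffAt ℝ 1 (fderiv ℝ f) x := h.fderiv_right (m := 1) (by norm_num)

lemma cda_pd {f : E2 → ℝ} {x : E2} (h : ContDiffAt ℝ 2 f x) (i : Fin 2) :
    ContDiffAt ℝ 1 (pd f i) x := (cda_fderiv h).clm_apply contDiffAt_const

lemma hess_eq {f : E2 → ℝ} {x : E2} (h : ContDiffAt ℝ 2 f x) (i j : Fin 2) :
    hessian f x i j = fderiv ℝ (fderiv ℝ f) x (EuclideanSpace.single i 1)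
      (EuclideanSpace.single j 1) := by
  have d : DifferentiableAt ℝ (fderiv ℝ f) x := (cda_fderiv h).differentiableAt one_ne_zero
  simp only [hessian, Matrix.of_apply]
  change fderiv ℝ (fun y => fderiv ℝ f y (EuclideanSpace.single j 1)) x _ = _
  rw [fderiv_clm_apply d (by fun_prop)]
  simp

lemma hess_symm {f : E2 → ℝ} {x : E2} (h : ContDiffAt ℝ 2 f x) (i j : Fin 2) :
    hessian f x i j = hessian f x j i := by
  rw [hess_eq h, hess_eq h]
  exact (h.isSymmSndFDerivAt (by simp)) _ _


lemma H_hom {H : E2 → ℝ} (hH : IsAnisoNorm H) (t : ℝ) (ht : 0 < t) (p : E2) : H (t • p) = t * H p := by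
  rw [hH.homog, abs_of_pos ht]

lemma H_zero {H : E2 → ℝ} (hH : IsAnisoNorm H) : H 0 = 0 := by
  have := hH.homog 0 0
  simpa using this

lemma H_cda {H : E2 → ℝ} (hH : IsAnisoNorm H) {p : E2} (hp : p ≠ 0) : ContDiffAt ℝ 2 H p :=
  hH.smooth.contDiffAt (isOpen_compl_singleton.mem_nhds hp)

lemma F_cda {H : E2 → ℝ} (hH : IsAnisoNorm H) {p : E2} (hp : p ≠ 0) : ContDiffAt ℝ 2 (Fani H) p :=
  ((H_cda hH hp).pow 2).div_const 2

lemma pdF {H : E2 → ℝ} (hH : IsAnisoNorm H) {p : E2} (hp : p ≠ 0) (i : Fin 2) : pd (Fani H) i p = H p * pd H i p := by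
  have d : DifferentiableAt ℝ H p := (H_cda hH hp).differentiableAt two_ne_zero
  have e : Fani H = fun x => (1 / 2 : ℝ) * (H x * H x) := by
    ext x; simp only [Fani]; ring
  rw [e, pd_mul (g := fun x => H x * H x) (by fun_prop) (d.mul d), pd_mul d d]
  simp [pd]; ring

lemma hessF {H : E2 → ℝ} (hH : IsAnisoNorm H) {p : E2} (hp : p ≠ 0) (i j : Fin 2) :
    hessian (Fani H) p i j = pd H i p * pd H j p + H p * hessian H p i j := by
  have e : pd (Fani H) j =ᶠ[𝓝 p] fun q => H q * pd H j q := by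
    filter_upwards [isOpen_compl_singleton.mem_nhds hp] with q hq
    exact pdF hH hq j
  have d : DifferentiableAt ℝ H p := (H_cda hH hp).differentiableAt two_ne_zero
  simp only [hessian, Matrix.of_apply]
  rw [pd_congr e, pd_mul d ((cda_pd (H_cda hH hp) j).differentiableAt one_ne_zero)]
  ring

lemma pdF_hom {H : E2 → ℝ} (hH : IsAnisoNorm H) (i : Fin 2) (t : ℝ) (ht : 0 < t) (p : E2) :
    pd (Fani H) i (t • p) = t * pd (Fani H) i p := by
  unfold pd
  rw [fderiv_hom (f := Fani H) 1 _ t ht p]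
  · simp
  · intro t ht p
    simp only [Fani, H_hom hH t ht]; ring

lemma pdF_smooth {H : E2 → ℝ} (hH : IsAnisoNorm H) (i : Fin 2) : ContDiffOn ℝ 1 (pd (Fani H) i) {0}ᶜ := fun _ hp =>
  (cda_pd (F_cda hH hp) i).contDiffWithinAt

lemma algebra_id {p0 p1 a0 a1 h h00 h01 h11 u00 u01 u11 : ℝ} (hp : p0 ≠ 0 ∨ p1 ≠ 0)
    (e : p0 * a0 + p1 * a1 = h) (e0 : p0 * h00 + p1 * h01 = 0) (e1 : p0 * h01 + p1 * h11 = 0) :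
    p0 * ((h * a0) * ((a1 * a0 + h * h01) * u01 + (a1 * a1 + h * h11) * u11)
        - (h * a1) * ((a0 * a0 + h * h00) * u01 + (a0 * a1 + h * h01) * u11))
      + p1 * ((h * a1) * ((a0 * a0 + h * h00) * u00 + (a0 * a1 + h * h01) * u01)
        - (h * a0) * ((a1 * a0 + h * h01) * u00 + (a1 * a1 + h * h11) * u01))
    = (h00 * u00 + h01 * u01 + (h01 * u01 + h11 * u11)) * h ^ 3 := by
  obtain ⟨c, c00, c01, c11⟩ : ∃ c, h00 = c * p1 ^ 2 ∧ h01 = - c * p0 * p1 ∧ h11 = c * p0 ^ 2 := by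
    rcases hp with hp | hp
    · refine ⟨h11 / p0 ^ 2, ?_, ?_, ?_⟩
      · field_simp; linear_combination p0 * e0 - p1 * e1
      · field_simp; linear_combination e1
      · field_simp
    · refine ⟨h00 / p1 ^ 2, ?_, ?_, ?_⟩
      · field_simp
      · field_simp; linear_combination e0
      · field_simp; linear_combination p1 * e1 - p0 * e0
  subst c00 c01 c11 e
  ring

/-- pointwise identity -/
lemma pointwise {H : E2 → ℝ} (hH : IsAnisoNorm H) {u : E2 → ℝ} {x : E2} (hu : ContDiffAt ℝ 2 u x) (hp : gradient u x ≠ 0) :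
    let p := gradient u x
    let A : Fin 2 → Fin 2 → ℝ := fun i j =>
      hessian (Fani H) p 0 i * hessian u x j 0 + hessian (Fani H) p 1 i * hessian u x j 1
    A 0 0 * A 1 1 - A 0 1 * A 1 0 = detH H u x ∧
    pd u 0 x * (pd (Fani H) 0 p * A 1 1 - pd (Fani H) 1 p * A 0 1)
      + pd u 1 x * (pd (Fani H) 1 p * A 0 0 - pd (Fani H) 0 p * A 1 0)
      = - (kH H u x * H p ^ 3) := by
  intro p A
  have hs := hess_symm hu 1 0
  have Hs := hess_symm (H_cda hH hp) 1 0
  have Fs := hess_symm (F_cda hH hp) 1 0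
  have hom0 : ∀ j, ∀ t : ℝ, 0 < t → ∀ p, pd H j (t • p) = t ^ 0 * pd H j p := by
    intro j t ht p
    unfold pd
    rw [fderiv_hom (f := H) 0 (by simpa using H_hom hH) t ht p]
    simp
  have E := euler (f := H) 1 (by simpa using H_hom hH) (p := p)
    ((H_cda hH hp).differentiableAt two_ne_zero)
  have Ej := fun j => euler 0 (hom0 j) (p := p)
    ((cda_pd (H_cda hH hp) j).differentiableAt one_ne_zero)
  have hp' : p 0 ≠ 0 ∨ p 1 ≠ 0 := by
    by_contra hc
    push Not at hc
    apply hp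
    ext j; fin_cases j
    · exact hc.1
    · exact hc.2
  constructor
  · simp only [A, detH, Matrix.det_fin_two]
    change _ = (hessian (Fani H) p 0 0 * hessian (Fani H) p 1 1 -
      hessian (Fani H) p 0 1 * hessian (Fani H) p 1 0) * _
    rw [hs]; ring
  · have E0 : p 0 * hessian H p 0 0 + p 1 * hessian H p 0 1 = 0 := by
      have := Ej 0
      rw [← Hs]; simpa [hessian] using this
    have E1 : p 0 * hessian H p 0 1 + p 1 * hessian H p 1 1 = 0 := by
      simpa [hessian] using Ej 1
    have key := algebra_id (u00 := hessian u x 0 0) (u01 := hessian u x 0 1)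
      (u11 := hessian u x 1 1) hp' (by simpa using E) E0 E1
    have q1 : ∀ i, pd (Fani H) i p = _ := pdF hH hp
    have q2 : ∀ i j, hessian (Fani H) p i j = _ := hessF hH hp
    simp only [A, kH, q1, q2, ← grad_coord u x, Fin.sum_univ_two, Fin.isValue]
    change p 0 * _ + p 1 * _ = -(-(hessian H p 0 0 * _ + hessian H p 0 1 * _ +
      (hessian H p 1 0 * _ + hessian H p 1 1 * _)) * H p ^ 3)
    have Hs' : hessian H p 1 0 = hessian H p 0 1 := Hs
    simp only [p] at key Hs' ⊢
    simp only [hs, Hs']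
    linear_combination key



section ufacts
variable {Ω : Set E2} {u : E2 → ℝ}

lemma u_cda1 (hΩo : IsOpen Ω) (hu : MemPhi0 Ω u) {x : E2} (hx : x ∈ Ω) : ContDiffAt ℝ 1 u x :=
  hu.c1.contDiffAt (mem_of_superset (hΩo.mem_nhds hx) subset_closure)

lemma u_diff (hΩo : IsOpen Ω) (hu : MemPhi0 Ω u) {x : E2} (hx : x ∈ Ω) : DifferentiableAt ℝ u x :=
  (u_cda1 hΩo hu hx).differentiableAt one_ne_zero

lemma grad_zero_iff {x : E2} : gradient u x = 0 ↔ fderiv ℝ u x = 0 := by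
  unfold gradient; simp

lemma grad_cont (hΩo : IsOpen Ω) (hu : MemPhi0 Ω u) {x : E2} (hx : x ∈ Ω) :
    ContinuousAt (gradient u) x := by
  have h : ContinuousAt (fderiv ℝ u) x :=
    ((u_cda1 hΩo hu hx).fderiv_right (m := 0) (by norm_num)).continuousAt
  exact (InnerProductSpace.toDual ℝ E2).symm.continuous.continuousAt.comp h

lemma crit_max (hΩo : IsOpen Ω) (hu : MemPhi0 Ω u) {x y : E2} (hx : x ∈ Ω) (hy : y ∈ Ω)
    (hc : gradient u x = 0) : u y ≤ u x := by
  rw [grad_zero_iff] at hc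
  have hd : HasDerivAt (fun t : ℝ => u (x + t • (y - x))) 0 0 := by
    have a : HasDerivAt (fun t : ℝ => x + t • (y - x)) (y - x) 0 := by
      simpa using ((hasDerivAt_id (0 : ℝ)).smul_const (y - x)).const_add x
    have b : HasFDerivAt u (fderiv ℝ u x) (x + (0 : ℝ) • (y - x)) := by
      rw [zero_smul, add_zero]; exact (u_diff hΩo hu hx).hasFDerivAt
    have := b.comp_hasDerivAt (0 : ℝ) a
    rw [hc] at this
    exact this
  have ht := hd.tendsto_slope_zero_right
  have key : u y - u x ≤ 0 := by
    refine ge_of_tendsto ht ?_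
    filter_upwards [Ioc_mem_nhdsGT zero_lt_one] with t ht
    have t0 : 0 < t := ht.1
    have h := hu.concave.2 hx hy (sub_nonneg.2 ht.2) t0.le (by ring)
    have e : (1 - t) • x + t • y = x + t • (y - x) := by module
    rw [e] at h
    simp only [smul_eq_mul] at h
    simp only [zero_add, zero_smul, add_zero, smul_eq_mul]
    rw [inv_mul_eq_div, le_div_iff₀ t0]
    linarith
  linarith

lemma cl_compact (hΩb : Bornology.IsBounded Ω) : IsCompact (closure Ω) :=
  Metric.isCompact_of_isClosed_isBounded isClosed_closure hΩb.closure

lemma mem_of_ne (hΩo : IsOpen Ω) (hu : MemPhi0 Ω u) {x : E2} (hx : x ∈ closure Ω) (h : u x ≠ 0) :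
    x ∈ Ω := by
  by_contra hc
  exact h (hu.bzero x (by rw [hΩo.frontier_eq]; exact ⟨hx, hc⟩))

lemma u_nonneg (hΩo : IsOpen Ω) (hΩb : Bornology.IsBounded Ω) (hu : MemPhi0 Ω u)
    {x : E2} (hx : x ∈ Ω) : 0 ≤ u x := by
  by_contra hneg
  push Not at hneg
  obtain ⟨x0, hx0, hmin⟩ := (cl_compact hΩb).exists_isMinOn ⟨x, subset_closure hx⟩
    hu.c1.continuousOn
  have h0 : u x0 < 0 := (hmin (subset_closure hx)).trans_lt hneg
  have hx0Ω := mem_of_ne hΩo hu hx0 h0.ne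
  have hloc : IsLocalMin u x0 := hmin.isLocalMin (mem_of_superset (hΩo.mem_nhds hx0Ω) subset_closure)
  have hg : gradient u x0 = 0 := grad_zero_iff.2 hloc.fderiv_eq_zero
  have hle : ∀ y ∈ closure Ω, u y ≤ u x0 := by
    intro y hy
    have hcl : closure Ω ⊆ closure Ω ∩ u ⁻¹' (Iic (u x0)) := by
      have hcl : IsClosed (closure Ω ∩ u ⁻¹' (Iic (u x0))) :=
        hu.c1.continuousOn.preimage_isClosed_of_isClosed isClosed_closure isClosed_Iic
      exact closure_minimal (fun z hz => ⟨subset_closure hz, crit_max hΩo hu hx0Ω hz hg⟩) hcl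
    exact (hcl hy).2
  have hne : Ω ≠ univ := by
    intro h
    rw [h] at hΩb
    exact NormedSpace.unbounded_univ ℝ E2 hΩb
  obtain ⟨z, hz⟩ : (frontier Ω).Nonempty := by
    rw [nonempty_frontier_iff]
    exact ⟨⟨x, hx⟩, hne⟩
  have := hle z (frontier_subset_closure hz)
  rw [hu.bzero z hz] at this
  linarith

lemma ngrad_open (hΩo : IsOpen Ω) (hu : MemPhi0 Ω u) {x : E2} (hx : x ∈ Ω)
    (hg : gradient u x ≠ 0) : ∀ᶠ y in 𝓝 x, y ∈ Ω ∧ gradient u y ≠ 0 := by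
  filter_upwards [hΩo.mem_nhds hx, (grad_cont hΩo hu hx).eventually_ne hg] with y h1 h2
  exact ⟨h1, h2⟩

lemma u_cda2 (hΩo : IsOpen Ω) (hΩb : Bornology.IsBounded Ω) (hu : MemPhi0 Ω u)
    (hu2 : ContDiffOn ℝ 2 u (Eu Ω u)) {x : E2} (hx : x ∈ Ω)
    (hg : gradient u x ≠ 0) : ContDiffAt ℝ 2 u x := by
  apply hu2.contDiffAt
  filter_upwards [ngrad_open hΩo hu hx hg] with y hy
  refine ⟨hy.1, u_nonneg hΩo hΩb hu hy.1, ?_⟩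
  have hb : BddAbove (u '' closure Ω) := (cl_compact hΩb).bddAbove_image hu.c1.continuousOn
  have hle : ∀ z ∈ closure Ω, u z ≤ maxcl Ω u := fun z hz => le_csSup hb (mem_image_of_mem u hz)
  refine lt_of_le_of_ne (hle y (subset_closure hy.1)) ?_
  intro he
  apply hy.2
  rw [grad_zero_iff]
  apply IsLocalMax.fderiv_eq_zero
  filter_upwards [hΩo.mem_nhds hy.1] with z hz
  rw [he]; exact hle z (subset_closure hz)

lemma hess_zero_ae (hΩo : IsOpen Ω) (hu : MemPhi0 Ω u) :
    ∀ᵐ x ∂(volume.restrict Ω), gradient u x = 0 → hessian u x = 0 := by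
  set M := {x ∈ Ω | gradient u x = 0} with hM
  have hconv : Convex ℝ M := by
    by_cases hne : M.Nonempty
    · obtain ⟨x0, hx0⟩ := hne
      have : M = {x ∈ Ω | u x0 ≤ u x} := by
        ext x; constructor
        · rintro ⟨h1, h2⟩
          exact ⟨h1, crit_max hΩo hu h1 hx0.1 h2⟩
        · rintro ⟨h1, h2⟩
          refine ⟨h1, ?_⟩
          rw [grad_zero_iff]
          apply IsLocalMax.fderiv_eq_zero
          filter_upwards [hΩo.mem_nhds h1] with z hz
          exact (crit_max hΩo hu hx0.1 hz hx0.2).trans h2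
      rw [this]
      exact hu.concave.convex_ge _
    · rw [not_nonempty_iff_eq_empty.1 hne]; exact convex_empty
  have h0 : ∀ᵐ x ∂(volume : Measure E2), x ∉ frontier M := by
    rw [ae_iff]; simpa using hconv.addHaar_frontier volume
  filter_upwards [ae_restrict_of_ae h0, ae_restrict_mem hΩo.measurableSet] with x hx hxΩ hg
  have hxi : x ∈ interior M := by
    by_contra hc
    exact hx ⟨subset_closure ⟨hxΩ, hg⟩, hc⟩
  ext i j
  have : pd u j =ᶠ[𝓝 x] fun _ => 0 := by
    filter_upwards [isOpen_interior.mem_nhds hxi] with y hy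
    rw [← grad_coord, (interior_subset hy).2]; rfl
  simp only [hessian, Matrix.of_apply]
  rw [pd_congr this]; simp [pd]

lemma u_bounds (hΩo : IsOpen Ω) (hΩb : Bornology.IsBounded Ω) (hΩc : Convex ℝ Ω)
    (hu : MemPhi0 Ω u) : ∃ B : ℝ, 0 ≤ B ∧ ∀ x ∈ Ω, |u x| ≤ B ∧ ‖gradient u x‖ ≤ B := by
  by_cases hne : Ω.Nonempty
  · have hU : UniqueDiffOn ℝ (closure Ω) := by
      apply uniqueDiffOn_convex hΩc.closure
      exact (hΩo.interior_eq.symm ▸ hne).mono (interior_mono subset_closure)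
    obtain ⟨B1, h1⟩ := (cl_compact hΩb).exists_bound_of_continuousOn hu.c1.continuousOn
    obtain ⟨B2, h2⟩ := (cl_compact hΩb).exists_bound_of_continuousOn
      (hu.c1.continuousOn_fderivWithin hU le_rfl)
    refine ⟨max (max B1 B2) 0, le_max_right _ _, fun x hx => ⟨?_, ?_⟩⟩
    · exact (h1 x (subset_closure hx)).trans (by simp)
    · have := h2 x (subset_closure hx)
      rw [fderivWithin_of_mem_nhds (mem_of_superset (hΩo.mem_nhds hx) subset_closure)] at this
      have e : ‖gradient u x‖ = ‖fderiv ℝ u x‖ := by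
        unfold gradient; simp
      rw [e]; exact this.trans (by simp)
  · refine ⟨0, le_rfl, fun x hx => (hne ⟨x, hx⟩).elim⟩

/-- the cut-off functions built from `u` -/
lemma test_fun (hΩo : IsOpen Ω) (hΩb : Bornology.IsBounded Ω) (hu : MemPhi0 Ω u)
    {η : ℝ → ℝ} (hη : ContDiff ℝ 1 η) {r : ℝ} (hr : 0 < r) (h0 : ∀ t, ‖t‖ < r → η t = 0) :
    ContDiff ℝ 1 (Ω.indicator fun x => η (u x)) ∧
    HasCompactSupport (Ω.indicator fun x => η (u x)) ∧
    tsupport (Ω.indicator fun x => η (u x)) ⊆ Ω := by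
  set φ := Ω.indicator fun x => η (u x) with φd
  set K := closure Ω ∩ u ⁻¹' (Ici r) with Kd
  have Kc : IsClosed K :=
    hu.c1.continuousOn.preimage_isClosed_of_isClosed isClosed_closure isClosed_Ici
  have Kco : IsCompact K := (cl_compact hΩb).of_isClosed_subset Kc inter_subset_left
  have KΩ : K ⊆ Ω := fun x hx => mem_of_ne hΩo hu hx.1 (lt_of_lt_of_le hr hx.2).ne'
  have hz : ∀ x, x ∉ K → φ x = 0 := by
    intro x hx
    by_cases hxΩ : x ∈ Ω
    · rw [φd, indicator_of_mem hxΩ]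
      apply h0
      rw [Real.norm_of_nonneg (u_nonneg hΩo hΩb hu hxΩ)]
      by_contra hc
      exact hx ⟨subset_closure hxΩ, not_lt.1 hc⟩
    · rw [φd, indicator_of_notMem hxΩ]
  have ts : tsupport φ ⊆ K := by
    apply closure_minimal _ Kc
    intro x hx
    by_contra hc
    exact hx (hz x hc)
  refine ⟨?_, Kco.of_isClosed_subset (isClosed_tsupport _) ts, ts.trans KΩ⟩
  rw [contDiff_iff_contDiffAt]
  intro x
  by_cases hx : x ∈ Ω
  · have : φ =ᶠ[𝓝 x] fun x => η (u x) := by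
      filter_upwards [hΩo.mem_nhds hx] with y hy
      rw [φd, indicator_of_mem hy]
    refine ContDiffAt.congr_of_eventuallyEq ?_ this
    exact hη.contDiffAt.comp x (u_cda1 hΩo hu hx)
  · have : φ =ᶠ[𝓝 x] fun _ => 0 := by
      filter_upwards [Kc.isOpen_compl.mem_nhds (fun h => hx (KΩ h))] with y hy
      exact hz y hy
    exact contDiffAt_const.congr_of_eventuallyEq this

lemma posPart_smooth : ContDiffOn ℝ 1 (fun t : ℝ => max t 0) {0}ᶜ := by
  intro t ht
  apply ContDiffAt.contDiffWithinAt
  rcases lt_or_gt_of_ne (show t ≠ 0 from ht) with h | h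
  · have : (fun t : ℝ => max t 0) =ᶠ[𝓝 t] fun _ => 0 := by
      filter_upwards [gt_mem_nhds h] with s hs
      exact max_eq_right hs.le
    exact contDiffAt_const.congr_of_eventuallyEq this
  · have : (fun t : ℝ => max t 0) =ᶠ[𝓝 t] fun t => t := by
      filter_upwards [lt_mem_nhds h] with s hs
      exact max_eq_left hs.le
    exact contDiffAt_id.congr_of_eventuallyEq this

/-- regularity of `g ∘ ∇u` -/
lemma comp_grad_smooth (hΩo : IsOpen Ω) (hΩb : Bornology.IsBounded Ω) (hu : MemPhi0 Ω u)
    (hu2 : ContDiffOn ℝ 2 u (Eu Ω u)) {g : E2 → ℝ} (hg : ContDiff ℝ 1 g) {r : ℝ} (hr : 0 < r)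
    (h0 : ∀ p, ‖p‖ < r → g p = 0) : ContDiffOn ℝ 1 (fun x => g (gradient u x)) Ω := by
  intro x hx
  apply ContDiffAt.contDiffWithinAt
  by_cases hp : gradient u x = 0
  · have : (fun x => g (gradient u x)) =ᶠ[𝓝 x] fun _ => 0 := by
      have := (grad_cont hΩo hu hx).norm
      rw [ContinuousAt, hp, norm_zero] at this
      filter_upwards [this (gt_mem_nhds hr)] with y hy
      exact h0 _ hy
    exact contDiffAt_const.congr_of_eventuallyEq this
  · have h1 : ContDiffAt ℝ 1 (gradient u) x := by
      have := cda_fderiv (u_cda2 hΩo hΩb hu hu2 hx hp)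
      exact (InnerProductSpace.toDual ℝ E2).symm.toContinuousLinearEquiv.contDiff.contDiffAt.comp x
        this
    exact hg.contDiffAt.comp x h1

lemma comp_grad_pd_zero (hΩo : IsOpen Ω) (hu : MemPhi0 Ω u) {g : E2 → ℝ} {r : ℝ} (hr : 0 < r)
    (h0 : ∀ p, ‖p‖ < r → g p = 0) {x : E2} (hx : x ∈ Ω) (hp : gradient u x = 0) (i : Fin 2) :
    pd (fun x => g (gradient u x)) i x = 0 := by
  have : (fun x => g (gradient u x)) =ᶠ[𝓝 x] fun _ => 0 := by
    have := (grad_cont hΩo hu hx).norm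
    rw [ContinuousAt, hp, norm_zero] at this
    filter_upwards [this (gt_mem_nhds hr)] with y hy
    exact h0 _ hy
  rw [pd_congr this]; simp [pd]

lemma comp_grad_pd (hΩo : IsOpen Ω) (hΩb : Bornology.IsBounded Ω) (hu : MemPhi0 Ω u)
    (hu2 : ContDiffOn ℝ 2 u (Eu Ω u)) {g : E2 → ℝ} (hg : ContDiff ℝ 1 g)
    {x : E2} (hx : x ∈ Ω) (hp : gradient u x ≠ 0) (i : Fin 2) :
    pd (fun x => g (gradient u x)) i x = pd g 0 (gradient u x) * hessian u x i 0
      + pd g 1 (gradient u x) * hessian u x i 1 := by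
  have c2 := u_cda2 hΩo hΩb hu hu2 hx hp
  have h1 : DifferentiableAt ℝ (gradient u) x := by
    have := (cda_fderiv c2).differentiableAt one_ne_zero
    exact ((InnerProductSpace.toDual ℝ E2).symm.toContinuousLinearEquiv.differentiableAt).comp x
      this
  have h2 : fderiv ℝ (fun x => g (gradient u x)) x
      = (fderiv ℝ g (gradient u x)).comp (fderiv ℝ (gradient u) x) :=
    fderiv_comp x (hg.differentiable one_ne_zero _) h1
  have h3 : ∀ k : Fin 2, (fderiv ℝ (gradient u) x (EuclideanSpace.single i 1)) k
      = hessian u x i k := by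
    intro k
    have e : pd u k = fun y => (EuclideanSpace.proj k : E2 →L[ℝ] ℝ) (gradient u y) := by
      ext y; simp [grad_coord]
    simp only [hessian, Matrix.of_apply]
    rw [e]
    unfold pd
    have := ((EuclideanSpace.proj k : E2 →L[ℝ] ℝ).hasFDerivAt.comp x h1.hasFDerivAt).fderiv
    have e2 : fderiv ℝ (fun y => (EuclideanSpace.proj k : E2 →L[ℝ] ℝ) (gradient u y)) x = _ := this
    rw [e2]; simp
  rw [show pd (fun x => g (gradient u x)) i x = fderiv ℝ (fun x => g (gradient u x)) x
    (EuclideanSpace.single i 1) from rfl, h2, ContinuousLinearMap.comp_apply, fderiv_expand, h3, h3]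
  ring

end ufacts

lemma pd_abs_le {g : E2 → ℝ} {C : ℝ} {p : E2} (h : ‖fderiv ℝ g p‖ ≤ C) (k : Fin 2) :
    |pd g k p| ≤ C := by
  have := (fderiv ℝ g p).le_opNorm (EuclideanSpace.single k 1)
  simp only [EuclideanSpace.norm_single, norm_one, mul_one] at this
  exact this.trans h

lemma pd_contOn {Ω : Set E2} (hΩo : IsOpen Ω) {f : E2 → ℝ} (hf : ContDiffOn ℝ 1 f Ω) (i : Fin 2) :
    ContinuousOn (pd f i) Ω :=
  (hf.continuousOn_fderiv_of_isOpen hΩo le_rfl).clm_apply continuousOn_const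

/-- sum of absolute values of Hessian entries -/
def SS (u : E2 → ℝ) (x : E2) : ℝ :=
  |hessian u x 0 0| + |hessian u x 0 1| + |hessian u x 1 0| + |hessian u x 1 1|

lemma SS_nonneg (u : E2 → ℝ) (x : E2) : 0 ≤ SS u x := by unfold SS; positivity

lemma main_aux (H : E2 → ℝ) (hH : IsAnisoNorm H)
    (Ω : Set E2) (hΩo : IsOpen Ω) (hΩb : Bornology.IsBounded Ω) (hΩc : Convex ℝ Ω)
    (u : E2 → ℝ) (hu : MemPhi0 Ω u) (hu2 : ContDiffOn ℝ 2 u (Eu Ω u)) :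
    ∫ x in Ω, u x * detH H u x
      = (1 / 2) * ∫ x in Ω, kH H u x * H (gradient u x) ^ 3 := by
  obtain ⟨G0, C0, hC0, G0s, G0d, G0b, G0z, G0e⟩ := trunc (pdF_smooth hH 0) (pdF_hom hH 0)
  obtain ⟨G1, C1, hC1, G1s, G1d, G1b, G1z, G1e⟩ := trunc (pdF_smooth hH 1) (pdF_hom hH 1)
  obtain ⟨η, D, hD, ηs, ηd, ηb, ηz, ηe⟩ := trunc posPart_smooth
    (fun t ht p => by rw [smul_eq_mul, mul_max_of_nonneg _ _ ht.le, mul_zero])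
  obtain ⟨B, hB, hub⟩ := u_bounds hΩo hΩb hΩc hu
  set φ : ℕ → E2 → ℝ := fun n => Ω.indicator fun x => η n (u x) with φd
  set a : ℕ → E2 → ℝ := fun n x => G0 n (gradient u x) with ad
  set b : ℕ → E2 → ℝ := fun n x => G1 n (gradient u x) with bd
  have hφ : ∀ n, ContDiff ℝ 1 (φ n) ∧ HasCompactSupport (φ n) ∧ tsupport (φ n) ⊆ Ω := by
    intro n
    obtain ⟨r, hr, h⟩ := ηz n
    exact test_fun hΩo hΩb hu (ηs n) hr h
  have ha : ∀ n, ContDiffOn ℝ 1 (a n) Ω := by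
    intro n
    obtain ⟨r, hr, h⟩ := G0z n
    exact comp_grad_smooth hΩo hΩb hu hu2 (G0s n) hr h
  have hb : ∀ n, ContDiffOn ℝ 1 (b n) Ω := by
    intro n
    obtain ⟨r, hr, h⟩ := G1z n
    exact comp_grad_smooth hΩo hΩb hu hu2 (G1s n) hr h
  have W := fun n => weak_jac hΩo (hφ n).1 (hφ n).2.1 (hφ n).2.2 (ha n) (hb n)
  have φx : ∀ n, ∀ x ∈ Ω, φ n x = η n (u x) := fun n x hx => indicator_of_mem hx _
  have φp : ∀ n, ∀ x ∈ Ω, ∀ i, pd (φ n) i x = deriv (η n) (u x) * pd u i x := by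
    intro n x hx i
    have e : φ n =ᶠ[𝓝 x] (η n ∘ u) := by
      filter_upwards [hΩo.mem_nhds hx] with y hy
      exact φx n y hy
    rw [pd_congr e]
    unfold pd
    rw [fderiv_comp x ((ηs n).differentiable one_ne_zero _) (u_diff hΩo hu hx),
      ContinuousLinearMap.comp_apply, fderiv_eq_smul_deriv, smul_eq_mul, mul_comm]
  have azero : ∀ n, ∀ x ∈ Ω, gradient u x = 0 → ∀ i, pd (a n) i x = 0 := by
    intro n x hx hp i
    obtain ⟨r, hr, h⟩ := G0z n
    exact comp_grad_pd_zero hΩo hu hr h hx hp i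
  have bzero : ∀ n, ∀ x ∈ Ω, gradient u x = 0 → ∀ i, pd (b n) i x = 0 := by
    intro n x hx hp i
    obtain ⟨r, hr, h⟩ := G1z n
    exact comp_grad_pd_zero hΩo hu hr h hx hp i
  have apd := fun n x (hx : x ∈ Ω) hp i => comp_grad_pd hΩo hΩb hu hu2 (G0s n) (x := x) hx hp i
  have bpd := fun n x (hx : x ∈ Ω) hp i => comp_grad_pd hΩo hΩb hu hu2 (G1s n) (x := x) hx hp i
  -- bounds
  set C := max C0 C1 with Cdef
  have hC : 0 ≤ C := hC0.trans (le_max_left _ _)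
  have lin : ∀ (v0 v1 : ℝ) (x : E2) (i : Fin 2), |v0| ≤ C → |v1| ≤ C →
      |v0 * hessian u x i 0 + v1 * hessian u x i 1| ≤ C * SS u x := by
    intro v0 v1 x i h0 h1
    calc |v0 * hessian u x i 0 + v1 * hessian u x i 1|
        ≤ |v0| * |hessian u x i 0| + |v1| * |hessian u x i 1| := by
          rw [← abs_mul, ← abs_mul]; exact abs_add_le _ _
      _ ≤ C * |hessian u x i 0| + C * |hessian u x i 1| := by gcongr
      _ ≤ C * SS u x := by
          rw [← mul_add]
          gcongr
          unfold SS
          fin_cases i <;> simp <;> linarith [abs_nonneg (hessian u x 0 0),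
            abs_nonneg (hessian u x 0 1), abs_nonneg (hessian u x 1 0),
            abs_nonneg (hessian u x 1 1)]
  have ba : ∀ n, ∀ x ∈ Ω, ∀ i, |pd (a n) i x| ≤ C * SS u x := by
    intro n x hx i
    by_cases hp : gradient u x = 0
    · rw [azero n x hx hp, abs_zero]; exact mul_nonneg hC (SS_nonneg u x)
    · rw [apd n x hx hp]
      exact lin _ _ x i (pd_abs_le ((G0d n _).trans (le_max_left _ _)) 0)
        (pd_abs_le ((G0d n _).trans (le_max_left _ _)) 1)
  have bb : ∀ n, ∀ x ∈ Ω, ∀ i, |pd (b n) i x| ≤ C * SS u x := by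
    intro n x hx i
    by_cases hp : gradient u x = 0
    · rw [bzero n x hx hp, abs_zero]; exact mul_nonneg hC (SS_nonneg u x)
    · rw [bpd n x hx hp]
      exact lin _ _ x i (pd_abs_le ((G1d n _).trans (le_max_right _ _)) 0)
        (pd_abs_le ((G1d n _).trans (le_max_right _ _)) 1)
  have va : ∀ n, ∀ x ∈ Ω, |a n x| ≤ C * B := by
    intro n x hx
    refine (G0b n _).trans ?_
    gcongr
    · exact le_max_left _ _
    · exact (hub x hx).2
  have vb : ∀ n, ∀ x ∈ Ω, |b n x| ≤ C * B := by
    intro n x hx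
    refine (G1b n _).trans ?_
    gcongr
    · exact le_max_right _ _
    · exact (hub x hx).2
  have vφ : ∀ n, ∀ x ∈ Ω, |φ n x| ≤ D * B := by
    intro n x hx
    rw [φx n x hx]
    refine (ηb n _).trans ?_
    gcongr
    exact (hub x hx).1
  have pφ : ∀ n, ∀ x ∈ Ω, ∀ i, |pd (φ n) i x| ≤ D * B := by
    intro n x hx i
    rw [φp n x hx i, abs_mul]
    have h1 : |deriv (η n) (u x)| ≤ D := by
      have := ηd n (u x)
      rwa [← norm_deriv_eq_norm_fderiv] at this
    have h2 : |pd u i x| ≤ B := by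
      refine pd_abs_le ?_ i
      have e : ‖gradient u x‖ = ‖fderiv ℝ u x‖ := by
        unfold gradient; simp
      rw [← e]; exact (hub x hx).2
    gcongr
  -- integrability
  have : IsFiniteMeasure (volume.restrict Ω) :=
    ⟨by rw [Measure.restrict_apply_univ]; exact hΩb.measure_lt_top⟩
  have SL : MemLp (SS u) 2 (volume.restrict Ω) :=
    (((hu.sobolev 0 0).abs.add (hu.sobolev 0 1).abs).add (hu.sobolev 1 0).abs).add
      (hu.sobolev 1 1).abs
  have S1 : Integrable (SS u) (volume.restrict Ω) := SL.integrable (by norm_num)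
  have S2 : Integrable (fun x => SS u x ^ 2) (volume.restrict Ω) := SL.integrable_sq
  -- eventual equality with the limits
  have lim : ∀ x ∈ Ω, gradient u x ≠ 0 → ∀ᶠ n in atTop,
      φ n x * (pd (a n) 0 x * pd (b n) 1 x - pd (a n) 1 x * pd (b n) 0 x) = u x * detH H u x ∧
      (pd (φ n) 0 x * (a n x * pd (b n) 1 x - b n x * pd (a n) 1 x)
          + pd (φ n) 1 x * (b n x * pd (a n) 0 x - a n x * pd (b n) 0 x))
        = - (kH H u x * H (gradient u x) ^ 3) := by
    intro x hx hp
    have upos : 0 < u x := by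
      refine lt_of_le_of_ne (u_nonneg hΩo hΩb hu hx) ?_
      intro h0
      apply hp
      rw [grad_zero_iff]
      apply IsLocalMin.fderiv_eq_zero
      filter_upwards [hΩo.mem_nhds hx] with z hz
      rw [← h0]; exact u_nonneg hΩo hΩb hu hz
    have pw := pointwise hH (u_cda2 hΩo hΩb hu hu2 hx hp) hp
    filter_upwards [G0e _ hp, G1e _ hp, ηe (u x) upos.ne'] with n h0 h1 h2
    have e1 : φ n x = u x := by
      rw [φx n x hx, h2.eq_of_nhds]; exact max_eq_left upos.le
    have e2 : deriv (η n) (u x) = 1 := by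
      rw [h2.deriv_eq]
      have : (fun t : ℝ => max t 0) =ᶠ[𝓝 (u x)] fun t => t := by
        filter_upwards [lt_mem_nhds upos] with s hs
        exact max_eq_left hs.le
      rw [this.deriv_eq]; simp
    have e3 : a n x = pd (Fani H) 0 (gradient u x) := h0.eq_of_nhds
    have e4 : b n x = pd (Fani H) 1 (gradient u x) := h1.eq_of_nhds
    have e5 : ∀ i, pd (a n) i x = hessian (Fani H) (gradient u x) 0 0 * hessian u x i 0
        + hessian (Fani H) (gradient u x) 1 0 * hessian u x i 1 := by
      intro i
      rw [apd n x hx hp i, pd_congr h0, pd_congr h0]; rfl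
    have e6 : ∀ i, pd (b n) i x = hessian (Fani H) (gradient u x) 0 1 * hessian u x i 0
        + hessian (Fani H) (gradient u x) 1 1 * hessian u x i 1 := by
      intro i
      rw [bpd n x hx hp i, pd_congr h1, pd_congr h1]; rfl
    simp only [φp n x hx, e1, e2, e3, e4, e5, e6, one_mul]
    exact ⟨by rw [← pw.1], pw.2⟩
  have T1 : Tendsto (fun n => ∫ x in Ω,
      φ n x * (pd (a n) 0 x * pd (b n) 1 x - pd (a n) 1 x * pd (b n) 0 x)) atTop
      (𝓝 (∫ x in Ω, u x * detH H u x)) := by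
    apply tendsto_integral_of_dominated_convergence (fun x => (D * B * (2 * C ^ 2)) * SS u x ^ 2)
    · intro n
      refine ContinuousOn.aestronglyMeasurable ?_ hΩo.measurableSet
      exact (hφ n).1.continuous.continuousOn.mul
        (((pd_contOn hΩo (ha n) 0).mul (pd_contOn hΩo (hb n) 1)).sub
          ((pd_contOn hΩo (ha n) 1).mul (pd_contOn hΩo (hb n) 0)))
    · exact S2.const_mul _
    · intro n
      filter_upwards [ae_restrict_mem hΩo.measurableSet] with x hx
      rw [Real.norm_eq_abs, abs_mul]
      have k : |pd (a n) 0 x * pd (b n) 1 x - pd (a n) 1 x * pd (b n) 0 x|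
          ≤ (C * SS u x) * (C * SS u x) + (C * SS u x) * (C * SS u x) := by
        refine (abs_sub _ _).trans ?_
        rw [abs_mul, abs_mul]
        have := mul_nonneg hC (SS_nonneg u x)
        gcongr <;> first | exact ba n x hx _ | exact bb n x hx _
      calc _ ≤ (D * B) * ((C * SS u x) * (C * SS u x) + (C * SS u x) * (C * SS u x)) := by
            gcongr
            exact vφ n x hx
        _ = _ := by ring
    · filter_upwards [ae_restrict_mem hΩo.measurableSet, hess_zero_ae hΩo hu] with x hx hz
      by_cases hp : gradient u x = 0
      · have : u x * detH H u x = 0 := by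
          simp [detH, hz hp]
        rw [this]
        simp only [azero _ x hx hp, zero_mul, sub_self, mul_zero]
        exact tendsto_const_nhds
      · refine tendsto_const_nhds.congr' ?_
        filter_upwards [lim x hx hp] with n hn
        exact hn.1.symm
  have T2 : Tendsto (fun n => ∫ x in Ω,
      (pd (φ n) 0 x * (a n x * pd (b n) 1 x - b n x * pd (a n) 1 x)
          + pd (φ n) 1 x * (b n x * pd (a n) 0 x - a n x * pd (b n) 0 x))) atTop
      (𝓝 (∫ x in Ω, - (kH H u x * H (gradient u x) ^ 3))) := by
    apply tendsto_integral_of_dominated_convergence (fun x => (D * B * (4 * C ^ 2 * B)) * SS u x)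
    · intro n
      refine ContinuousOn.aestronglyMeasurable ?_ hΩo.measurableSet
      have c0 := (pd_cont (hφ n).1 0).continuousOn (s := Ω)
      have c1 := (pd_cont (hφ n).1 1).continuousOn (s := Ω)
      have ca := (ha n).continuousOn
      have cb := (hb n).continuousOn
      exact (c0.mul ((ca.mul (pd_contOn hΩo (hb n) 1)).sub (cb.mul (pd_contOn hΩo (ha n) 1)))).add
        (c1.mul ((cb.mul (pd_contOn hΩo (ha n) 0)).sub (ca.mul (pd_contOn hΩo (hb n) 0))))
    · exact S1.const_mul _
    · intro n
      filter_upwards [ae_restrict_mem hΩo.measurableSet] with x hx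
      have hS := mul_nonneg hC (SS_nonneg u x)
      have hCB := mul_nonneg hC hB
      have hDB := mul_nonneg hD hB
      have k : ∀ i, |a n x * pd (b n) i x - b n x * pd (a n) i x|
          ≤ (C * B) * (C * SS u x) + (C * B) * (C * SS u x) := by
        intro i
        refine (abs_sub _ _).trans ?_
        rw [abs_mul, abs_mul]
        gcongr <;> first | exact ba n x hx _ | exact bb n x hx _ | exact va n x hx | exact vb n x hx
      rw [Real.norm_eq_abs]
      refine (abs_add_le _ _).trans ?_
      rw [abs_mul, abs_mul, abs_sub_comm (b n x * _)]
      calc _ ≤ (D * B) * ((C * B) * (C * SS u x) + (C * B) * (C * SS u x))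
            + (D * B) * ((C * B) * (C * SS u x) + (C * B) * (C * SS u x)) := by
            gcongr
            · exact pφ n x hx 0
            · exact k 1
            · exact pφ n x hx 1
            · exact k 0
        _ = _ := by ring
    · filter_upwards [ae_restrict_mem hΩo.measurableSet] with x hx
      by_cases hp : gradient u x = 0
      · have : - (kH H u x * H (gradient u x) ^ 3) = 0 := by
          rw [hp, H_zero hH]; simp
        rw [this]
        simp only [azero _ x hx hp, bzero _ x hx hp, sub_self, mul_zero, add_zero]
        exact tendsto_const_nhds
      · refine tendsto_const_nhds.congr' ?_
        filter_upwards [lim x hx hp] with n hn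
        exact hn.2.symm
  have T3 := T2.const_mul (-(1 / 2 : ℝ))
  simp only [← W] at T3
  have := tendsto_nhds_unique T1 T3
  rw [this, integral_neg]
  ring

/-- for `u ∈ Φ₀(Ω) ∩ C²(E_u)` on a bounded convex open `Ω` with `C²`
boundary, the anisotropic Hessian integral satisfies
`I_H[u,Ω] = ∫_Ω u det_H[u] dx = (1/2) ∫_Ω k_H(x) H(∇u)³ dx`. -/
theorem hessian_integral_representation
    (H : E2 → ℝ) (hH : IsAnisoNorm H)
    (Ω : Set E2) (hΩo : IsOpen Ω) (hΩb : Bornology.IsBounded Ω) (hΩc : Convex ℝ Ω)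
    (hΩbd : HasC2Boundary Ω)
    (u : E2 → ℝ) (hu : MemPhi0 Ω u) (hu2 : ContDiffOn ℝ 2 u (Eu Ω u)) :
    ∫ x in Ω, u x * detH H u x
      = (1 / 2) * ∫ x in Ω, kH H u x * H (gradient u x) ^ 3 := by
  exact main_aux H hH Ω hΩo hΩb hΩc u hu hu2
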